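/- If ε : ℕ → ZMod 2 satisfies the Adem constraints and ε(2) = 0, then for every odd natural number r ≥ 3 one has ε(3)·ε(r) = ε(2r+1). -/

import Mathlib

/-!
Let `F = ∑ ε(i) Xⁱ` over `𝔽₂`; then `E ε s d` is the coefficient of `X^d` in `F^s`. As `ε 0 = 0` and
`ε 1 = 1`, this coefficient vanishes for `d < s` and is `1` for `d = s`, so very few terms of an
Adem constraint survive.

* For `s = 2` and index `2i - 1`, with `i ≥ 4`, the only surviving term is `(i - 3) ε(i)`, while the
  left side is `0` because `ε 2 = 0`. Hence `ε` vanishes at every even `i ≥ 4`.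
* For `s = 3` and index `4r`, the left side is `ε(3) ε(r)`, since squaring is the Frobenius and so
  `[X^{4r}] F⁴ = ε(r)`. On the right side, the term at `2r` has the factor `ε(2r) = 0`, the term at
  `2r + 1` is `C(2r - 3, 2) ε(2r + 1)`, and all later terms vanish. The binomial coefficient is odd
  for odd `r`, which gives the claim.
-/

/-- `E ε s d` is the sum over all `s`-tuples of naturals summing to `d` of the
products of the values of `ε`, in `ZMod 2`. -/
def E (ε : ℕ → ZMod 2) (s d : ℕ) : ZMod 2 :=
  ∑ f ∈ Finset.Nat.antidiagonalTuple s d, ∏ j, ε (f j)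

/-- `ε` satisfies the Adem constraints encoding the Adem relations among the
Dyer-Lashof operations on `F₂[u]` with `Q^{2r} u = ε r • u^{r+1}`. -/
def AdemConstraints (ε : ℕ → ZMod 2) : Prop :=
  ε 0 = 0 ∧ ε 1 = 1 ∧ ∀ s r : ℕ, r > 2 * s →
    ε s * E ε (s + 1) r =
      ∑ i ∈ (Finset.Icc (s + 1) (r - s - 1)).filter (fun i => r ≤ 2 * i),
        ((Nat.choose (i - s - 1) (2 * i - r) : ZMod 2) * ε i * E ε (i + 1) (r + s - i))

open PowerSeries in
lemma E_eq_coeff (ε : ℕ → ZMod 2) (s d : ℕ) :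
    E ε s d = coeff d ((PowerSeries.mk ε) ^ s) := by
  induction s generalizing d with
  | zero =>
    cases d with
    | zero => simp [E]
    | succ d => simp [E, coeff_one]
  | succ s ih =>
    rw [pow_succ', coeff_mul]
    simp only [← ih, coeff_mk, E]
    simp only [Finset.mul_sum]
    rw [Finset.sum_sigma']
    refine Finset.sum_bij' (fun f _ => ⟨(f 0, ∑ j, Fin.tail f j), Fin.tail f⟩)
      (fun p _ => Fin.cons p.1.1 p.2) ?_ ?_ ?_ ?_ ?_
    · intro f hf
      rw [Finset.Nat.mem_antidiagonalTuple, Fin.sum_univ_succ] at hf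
      simpa [Finset.Nat.mem_antidiagonalTuple, Fin.tail] using hf
    · rintro ⟨⟨a, b⟩, g⟩ hp
      simp only [Finset.mem_sigma, Finset.HasAntidiagonal.mem_antidiagonal,
        Finset.Nat.mem_antidiagonalTuple] at hp
      simp [Finset.Nat.mem_antidiagonalTuple, Fin.sum_univ_succ, hp.1, hp.2]
    · intro f hf
      simp
    · rintro ⟨⟨a, b⟩, g⟩ hp
      simp only [Finset.mem_sigma, Finset.Nat.mem_antidiagonalTuple] at hp
      simp [hp.2]
    · intro f hf
      rw [Fin.prod_univ_succ]
      rfl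

open PowerSeries in
lemma E_eq_coeff_mul (ε : ℕ → ZMod 2) (h0 : ε 0 = 0) (h1 : ε 1 = 1) (s : ℕ) :
    ∃ G : PowerSeries (ZMod 2), constantCoeff G = 1 ∧
      ∀ d, E ε s d = coeff d (X ^ s * G) := by
  have hF : PowerSeries.mk ε = X * PowerSeries.mk (fun n => ε (n + 1)) := by
    ext n
    cases n with
    | zero => simp [h0]
    | succ n => simp [coeff_succ_X_mul]
  refine ⟨(PowerSeries.mk (fun n => ε (n + 1))) ^ s, ?_, fun d => ?_⟩
  · rw [map_pow, ← coeff_zero_eq_constantCoeff_apply, coeff_mk, zero_add, h1, one_pow]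
  · rw [E_eq_coeff, hF, mul_pow]

lemma E_eq_zero_of_lt {ε : ℕ → ZMod 2} (h0 : ε 0 = 0) (h1 : ε 1 = 1) {s d : ℕ} (h : d < s) :
    E ε s d = 0 := by
  obtain ⟨G, -, hG⟩ := E_eq_coeff_mul ε h0 h1 s
  rw [hG, PowerSeries.coeff_X_pow_mul', if_neg (by omega)]

lemma E_self {ε : ℕ → ZMod 2} (h0 : ε 0 = 0) (h1 : ε 1 = 1) (s : ℕ) :
    E ε s s = 1 := by
  obtain ⟨G, hG1, hG⟩ := E_eq_coeff_mul ε h0 h1 s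
  rw [hG, PowerSeries.coeff_X_pow_mul', if_pos le_rfl]
  simpa using hG1

/-- Over `𝔽₂` the off-diagonal terms of a square cancel in pairs. -/
lemma coeff_two_mul_sq (G : PowerSeries (ZMod 2)) (d : ℕ) :
    PowerSeries.coeff (2 * d) (G ^ 2) = PowerSeries.coeff d G := by
  have hsq : ∀ x : ZMod 2, x * x = x := by decide
  have hmem : (d, d) ∈ Finset.HasAntidiagonal.antidiagonal (2 * d) := by
    rw [Finset.HasAntidiagonal.mem_antidiagonal]; omega
  rw [sq, PowerSeries.coeff_mul, ← Finset.add_sum_erase _ _ hmem, hsq]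
  conv_rhs => rw [← add_zero (PowerSeries.coeff d G)]
  congr 1
  refine Finset.sum_involution (fun p _ => p.swap) ?_ ?_ ?_ ?_
  · rintro ⟨a, b⟩ -
    simp only [Prod.swap]
    rw [mul_comm (PowerSeries.coeff b G)]
    exact CharTwo.add_self_eq_zero _
  · rintro ⟨a, b⟩ hp - heq
    simp only [Finset.mem_erase, Finset.HasAntidiagonal.mem_antidiagonal, Prod.swap, Prod.mk.injEq, ne_eq] at *
    omega
  · rintro ⟨a, b⟩ hp
    simp only [Finset.mem_erase, Finset.HasAntidiagonal.mem_antidiagonal, Prod.swap, Prod.mk.injEq, ne_eq] at *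
    omega
  · rintro ⟨a, b⟩ -
    rfl

lemma E_four (ε : ℕ → ZMod 2) (r : ℕ) : E ε 4 (4 * r) = ε r := by
  rw [E_eq_coeff, show 4 * r = 2 * (2 * r) by ring, show (4 : ℕ) = 2 * 2 from rfl, pow_mul,
    coeff_two_mul_sq, coeff_two_mul_sq, PowerSeries.coeff_mk]

/-- The constraint for `s = 2` and index `2 * i - 1` kills `ε i`. -/
lemma eps_even_eq_zero {ε : ℕ → ZMod 2} (hε : AdemConstraints ε) (h2 : ε 2 = 0) {i : ℕ}
    (hi : 4 ≤ i) (he : Even i) : ε i = 0 := by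
  obtain ⟨h0, h1, h⟩ := hε
  have key := h 2 (2 * i - 1) (by omega)
  rw [h2, zero_mul, Finset.sum_eq_single i] at key
  · rw [show 2 * i - 1 + 2 - i = i + 1 by omega, E_self h0 h1,
      show 2 * i - (2 * i - 1) = 1 by omega, Nat.choose_one_right] at key
    have hodd : ((i - 2 - 1 : ℕ) : ZMod 2) = 1 := by
      rw [ZMod.natCast_eq_one_iff_odd]
      obtain ⟨k, rfl⟩ := he
      exact ⟨k - 2, by omega⟩
    simpa [hodd] using key.symm
  · intro j hj hne
    simp only [Finset.mem_filter, Finset.mem_Icc] at hj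
    rw [E_eq_zero_of_lt h0 h1 (by omega), mul_zero]
  · intro hi'
    simp only [Finset.mem_filter, Finset.mem_Icc] at hi'
    omega

theorem stmt_2 (ε : ℕ → ZMod 2) (hε : AdemConstraints ε) (h2 : ε 2 = 0) :
    ∀ r : ℕ, 3 ≤ r → Odd r → ε 3 * ε r = ε (2 * r + 1) := by
  intro r hr hodd
  have heven : ε (2 * r) = 0 := eps_even_eq_zero hε h2 (by omega) (even_two_mul r)
  obtain ⟨h0, h1, h⟩ := hε
  have key := h 3 (4 * r) (by omega)
  rw [E_four, Finset.sum_eq_single (2 * r + 1)] at key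
  · rw [show 4 * r + 3 - (2 * r + 1) = 2 * r + 1 + 1 by omega, E_self h0 h1,
      show 2 * (2 * r + 1) - 4 * r = 2 by omega] at key
    have hchoose : ((Nat.choose (2 * r + 1 - 3 - 1) 2 : ℕ) : ZMod 2) = 1 := by
      rw [ZMod.natCast_eq_one_iff_odd]
      obtain ⟨k, rfl⟩ := hodd
      obtain ⟨m, rfl⟩ : ∃ m, k = m + 1 := ⟨k - 1, by omega⟩
      -- For `r = 2m + 3` the coefficient is `C(4m + 3, 2) = (4m + 3)(2m + 1)`.
      rw [show 2 * (2 * (m + 1) + 1) + 1 - 3 - 1 = 4 * m + 3 by omega, Nat.choose_two_right,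
        show (4 * m + 3) * (4 * m + 3 - 1) = ((4 * m + 3) * (2 * m + 1)) * 2 by
          rw [show 4 * m + 3 - 1 = (2 * m + 1) * 2 by omega]; ring,
        Nat.mul_div_cancel _ (by norm_num)]
      exact Odd.mul ⟨2 * m + 1, by ring⟩ ⟨m, rfl⟩
    rwa [hchoose, one_mul, mul_one] at key
  · intro j hj hne
    simp only [Finset.mem_filter, Finset.mem_Icc] at hj
    rcases eq_or_ne j (2 * r) with rfl | hj'
    · rw [heven, mul_zero, zero_mul]
    · rw [E_eq_zero_of_lt h0 h1 (by omega), mul_zero]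
  · intro hmem
    simp only [Finset.mem_filter, Finset.mem_Icc] at hmem
    omega
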